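/- Assume W + c₁ < w. Let T > 0, b₀ ∈ [0, 1], and 0 ≤ ε₀ ≤ ρ_T(b₀). Then Γ₁(b₀, ε₀) ≥ min{Γ₁(1, 1), T} (as elements of [0, ∞]). -/

import Mathlib

open Real ENNReal

noncomputable def f₁ (w θ η W c₁ c₂ τ b₀ ε₀ : ℝ) : ℝ :=
  b₀ + W * ε₀ / (w + θ) * (Real.exp ((w + θ) * τ) - 1) +
    (c₁ - c₂) / w * (Real.exp (w * τ) - 1) +
    c₂ / (w + η) * (Real.exp ((w + η) * τ) - 1)

noncomputable def f₂ (w τ : ℝ) : ℝ := Real.exp (w * τ)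

/-- The comparison function `b̃` of Lemma 1. -/
noncomputable def btilde (w θ η W c₁ c₂ τ b₀ ε₀ : ℝ) : ℝ :=
  f₁ w θ η W c₁ c₂ τ b₀ ε₀ / f₂ w τ

/-- `Γ₁(b₀, ε₀)`: the infimum in `[0, ∞]` of the set
`{τ ≥ 0 : b̃(τ, b₀, ε₀) = 1 and (∂/∂τ)b̃(τ, b₀, ε₀) ≥ 0}` (`∞` if the set is empty). -/
noncomputable def Γ₁ (w θ η W c₁ c₂ b₀ ε₀ : ℝ) : ℝ≥0∞ :=
  sInf {x : ℝ≥0∞ | ∃ τ : ℝ, 0 ≤ τ ∧ x = ENNReal.ofReal τ ∧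
    btilde w θ η W c₁ c₂ τ b₀ ε₀ = 1 ∧
    0 ≤ deriv (fun s => btilde w θ η W c₁ c₂ s b₀ ε₀) τ}

/-- The threshold function `ρ_T` of Lemma 2(iii). -/
noncomputable def ρ (w θ W T y : ℝ) : ℝ :=
  (w + θ) * (1 - y) / (W * (Real.exp ((w + θ) * T) - 1)) + 1

/-!
The hypothesis `ε₀ ≤ ρ_T(b₀)` says exactly that `b̃(T, b₀, ε₀) ≤ b̃(T, 1, 1)`. Up to the positive
factor `e^{-wτ}`, the difference `b̃(τ, 1, 1) - b̃(τ, b₀, ε₀)` is an affine function of the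
increasing function `τ ↦ ∫₀^τ e^{(w+θ)s} ds`, so being nonnegative at `0` and at `T` it is
nonnegative on `[0, T]`. It remains to see that a function `g ≥ f` with `g 0 ≤ 1` upcrosses the
level `1` no later than `f` does. Let `f` upcross at time `τ`, so that `1 ≤ g τ`. If `τ = 0`, then
`f` and `g` agree at `0` and the slope of `g` there is at least that of `f`. If `τ > 0` and every
visit of `g` to the level in `[0, τ]` had negative slope, `g` could never get above the level; then
`g` would be maximal on `[0, τ]` at `τ`, where its slope would be nonnegative after all.
-/

section Upcrossing

variable {f g : ℝ → ℝ} {a b f' y T : ℝ}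

lemma deriv_mul_sub_nonneg_of_isMinOn_uIcc (hf : HasDerivAt f f' a)
    (hmin : IsMinOn f (Set.uIcc a b) a) : 0 ≤ f' * (b - a) := by
  have hcone : b - a ∈ posTangentConeAt (Set.uIcc a b) a :=
    sub_mem_posTangentConeAt_of_segment_subset (segment_eq_uIcc a b).subset
  simpa [mul_comm] using
    hmin.localize.hasFDerivWithinAt_nonneg hf.hasFDerivAt.hasFDerivWithinAt hcone

lemma deriv_nonneg_of_isMaxOn_Icc_right (hab : a < b) (hf : HasDerivAt f f' b)
    (hmax : IsMaxOn f (Set.Icc a b) b) : 0 ≤ f' := by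
  rw [← Set.uIcc_of_ge hab.le] at hmax
  have hslope := deriv_mul_sub_nonneg_of_isMinOn_uIcc hf.neg hmax.neg
  rw [neg_mul_comm, neg_sub] at hslope
  exact nonneg_of_mul_nonneg_left hslope (sub_pos.2 hab)

lemma deriv_le_deriv_of_le_on_Icc_of_eq_left {g' : ℝ} (hab : a < b) (hf : HasDerivAt f f' a)
    (hg : HasDerivAt g g' a) (hfg : ∀ x ∈ Set.Icc a b, f x ≤ g x) (ha : f a = g a) :
    f' ≤ g' := by
  have hmin : IsMinOn (g - f) (Set.uIcc a b) a := by
    intro x hx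
    rw [Set.uIcc_of_le hab.le] at hx
    simpa [ha] using hfg x hx
  exact sub_nonneg.1 <| nonneg_of_mul_nonneg_left
    (deriv_mul_sub_nonneg_of_isMinOn_uIcc (hg.sub hf) hmin) (sub_pos.2 hab)

lemma exists_mem_Icc_eq_and_deriv_nonneg (hf : Differentiable ℝ f) (hab : a < b)
    (ha : f a ≤ y) (hb : y ≤ f b) : ∃ x ∈ Set.Icc a b, f x = y ∧ 0 ≤ deriv f x := by
  by_contra! hneg
  have hle : ∀ x ∈ Set.Icc a b, f x ≤ y :=
    image_le_of_deriv_right_lt_deriv_boundary hf.continuous.continuousOn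
      (fun x _ ↦ (hf x).hasDerivAt.hasDerivWithinAt) ha (fun x ↦ hasDerivAt_const x y)
      fun x hx ↦ hneg x (Set.Ico_subset_Icc_self hx)
  have hb_mem := Set.right_mem_Icc.2 hab.le
  have hmax : IsMaxOn f (Set.Icc a b) b := fun x hx ↦ (hle x hx).trans hb
  exact (hneg b hb_mem ((hle b hb_mem).antisymm hb)).not_ge
    (deriv_nonneg_of_isMaxOn_Icc_right hab (hf b).hasDerivAt hmax)

/-- The first time at which `f` is at level `y` with nonnegative slope, as an infimum in `[0, ∞]`,
hence `∞` if there is no such time. Only meaningful for differentiable `f`, as `deriv` is `0` at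
other points. -/
noncomputable def upcrossingTime (f : ℝ → ℝ) (y : ℝ) : ℝ≥0∞ :=
  sInf {x : ℝ≥0∞ | ∃ τ : ℝ, 0 ≤ τ ∧ x = ENNReal.ofReal τ ∧ f τ = y ∧ 0 ≤ deriv f τ}

lemma upcrossingTime_le_ofReal {σ τ : ℝ} (hσ : σ ∈ Set.Icc 0 τ) (hfσ : f σ = y)
    (hderiv : 0 ≤ deriv f σ) : upcrossingTime f y ≤ ENNReal.ofReal τ :=
  (show upcrossingTime f y ≤ ENNReal.ofReal σ from sInf_le ⟨σ, hσ.1, rfl, hfσ, hderiv⟩).trans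
    (ENNReal.ofReal_le_ofReal hσ.2)

lemma min_upcrossingTime_le_of_le_on_Icc (hf : DifferentiableAt ℝ f 0) (hg : Differentiable ℝ g)
    (hfg : ∀ τ ∈ Set.Icc 0 T, f τ ≤ g τ) (hg0 : g 0 ≤ y) :
    min (upcrossingTime g y) (ENNReal.ofReal T) ≤ upcrossingTime f y := by
  refine le_sInf ?_
  rintro _ ⟨τ, hτ, rfl, hfτ, hderiv⟩
  rcases le_or_gt T τ with hTτ | hτT
  · exact min_le_of_right_le (ENNReal.ofReal_le_ofReal hTτ)
  refine min_le_of_left_le ?_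
  have hgτ : y ≤ g τ := hfτ.ge.trans (hfg τ ⟨hτ, hτT.le⟩)
  rcases hτ.eq_or_lt with rfl | hτ_pos
  · have hg_eq : g 0 = y := hg0.antisymm hgτ
    have hslope : deriv f 0 ≤ deriv g 0 := deriv_le_deriv_of_le_on_Icc_of_eq_left hτT
      hf.hasDerivAt (hg 0).hasDerivAt hfg (hfτ.trans hg_eq.symm)
    exact upcrossingTime_le_ofReal ⟨le_rfl, le_rfl⟩ hg_eq (hderiv.trans hslope)
  · obtain ⟨σ, hσ, hgσ, hgσ'⟩ := exists_mem_Icc_eq_and_deriv_nonneg hg hτ_pos hg0 hgτ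
    exact upcrossingTime_le_ofReal hσ hgσ hgσ'

end Upcrossing

/-- The integral `∫₀^τ e^{ks} ds` in closed form, for `k ≠ 0`; it enters `f₁` with the rates
`w + θ`, `w` and `w + η`. -/
noncomputable def expPrimitive (k τ : ℝ) : ℝ :=
  (Real.exp (k * τ) - 1) / k

lemma expPrimitive_zero (k : ℝ) : expPrimitive k 0 = 0 := by
  simp [expPrimitive]

lemma strictMono_expPrimitive {k : ℝ} (hk : k ≠ 0) : StrictMono (expPrimitive k) := by
  refine strictMono_of_hasDerivAt_pos (f' := fun τ ↦ Real.exp (k * τ)) (fun τ ↦ ?_)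
    fun τ ↦ Real.exp_pos _
  have hexp : HasDerivAt (fun s ↦ Real.exp (k * s)) (Real.exp (k * τ) * k) τ := by
    simpa using ((hasDerivAt_id τ).const_mul k).exp
  have hquot := (hexp.sub_const 1).div_const k
  rwa [mul_div_cancel_right₀ _ hk] at hquot

section Comparison

variable {w θ W T : ℝ} (η c₁ c₂ : ℝ) {b b' ε ε' : ℝ}

lemma f₁_eq_expPrimitive (w θ W τ b ε : ℝ) :
    f₁ w θ η W c₁ c₂ τ b ε = b + W * ε * expPrimitive (w + θ) τ +
      ((c₁ - c₂) * expPrimitive w τ + c₂ * expPrimitive (w + η) τ) := by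
  unfold f₁ expPrimitive
  ring

lemma btilde_zero (w θ W b ε : ℝ) : btilde w θ η W c₁ c₂ 0 b ε = b := by
  simp [btilde, f₁, f₂]

lemma differentiable_btilde (w θ W b ε : ℝ) :
    Differentiable ℝ fun τ ↦ btilde w θ η W c₁ c₂ τ b ε := by
  unfold btilde f₁ f₂
  exact Differentiable.div (by fun_prop) (by fun_prop) fun τ ↦ (Real.exp_pos _).ne'

lemma btilde_le_btilde_iff {τ : ℝ} :
    btilde w θ η W c₁ c₂ τ b ε ≤ btilde w θ η W c₁ c₂ τ b' ε' ↔
      b + W * ε * expPrimitive (w + θ) τ ≤ b' + W * ε' * expPrimitive (w + θ) τ := by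
  unfold btilde f₂
  rw [div_le_div_iff_of_pos_right (Real.exp_pos _), f₁_eq_expPrimitive, f₁_eq_expPrimitive,
    add_le_add_iff_right]

lemma le_ρ_iff_btilde_le (hk : w + θ ≠ 0) (hW : 0 < W) (hT : 0 < T) :
    ε ≤ ρ w θ W T b ↔ btilde w θ η W c₁ c₂ T b ε ≤ btilde w θ η W c₁ c₂ T 1 1 := by
  have hP : 0 < expPrimitive (w + θ) T := expPrimitive_zero (w + θ) ▸ strictMono_expPrimitive hk hT
  have hρ : ρ w θ W T b = (1 - b) / (W * expPrimitive (w + θ) T) + 1 := by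
    unfold ρ expPrimitive
    field_simp
  rw [btilde_le_btilde_iff, hρ, ← sub_le_iff_le_add, le_div_iff₀ (mul_pos hW hP)]
  constructor <;> intro h <;> linarith

lemma btilde_le_btilde_of_le_of_mem_Icc (hk : w + θ ≠ 0) (hb : b ≤ b')
    (hT : btilde w θ η W c₁ c₂ T b ε ≤ btilde w θ η W c₁ c₂ T b' ε') {τ : ℝ}
    (hτ : τ ∈ Set.Icc 0 T) :
    btilde w θ η W c₁ c₂ τ b ε ≤ btilde w θ η W c₁ c₂ τ b' ε' := by
  rw [btilde_le_btilde_iff] at hT ⊢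
  have hmono := (strictMono_expPrimitive hk).monotone
  have hP0 : 0 ≤ expPrimitive (w + θ) τ := expPrimitive_zero (w + θ) ▸ hmono hτ.1
  have hPT : expPrimitive (w + θ) τ ≤ expPrimitive (w + θ) T := hmono hτ.2
  rcases le_total (W * ε) (W * ε') with hε | hε
  · exact add_le_add hb (mul_le_mul_of_nonneg_right hε hP0)
  · have hgap := mul_le_mul_of_nonneg_left hPT (sub_nonneg.2 hε)
    linarith

end Comparison

theorem stmt_10_general (w θ η W c₁ c₂ : ℝ) (hk : w + θ ≠ 0) (hW : 0 < W) (T : ℝ) (hT : 0 < T)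
    (b₀ ε₀ : ℝ) (hb₀ : b₀ ≤ 1) (hε₀ρ : ε₀ ≤ ρ w θ W T b₀) :
    min (Γ₁ w θ η W c₁ c₂ 1 1) (ENNReal.ofReal T) ≤ Γ₁ w θ η W c₁ c₂ b₀ ε₀ := by
  have hle_T := (le_ρ_iff_btilde_le η c₁ c₂ hk hW hT).1 hε₀ρ
  exact min_upcrossingTime_le_of_le_on_Icc
    (differentiable_btilde η c₁ c₂ w θ W b₀ ε₀).differentiableAt
    (differentiable_btilde η c₁ c₂ w θ W 1 1)
    (fun _ ↦ btilde_le_btilde_of_le_of_mem_Icc η c₁ c₂ hk hb₀ hle_T)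
    (btilde_zero η c₁ c₂ w θ W 1 1).le

/-- Lemma 2(iii): if `ε₀ ≤ ρ_T(b₀)` then `Γ₁(b₀, ε₀) ≥ min {Γ₁(1,1), T}`. -/
theorem stmt_10 (w θ η W c₁ c₂ : ℝ) (hw : 0 < w) (hθ : 0 < θ) (hη : 0 < η)
    (hW : 0 < W) (hc₁ : 0 ≤ c₁) (hc₂ : 0 ≤ c₂) (hWc : W + c₁ < w)
    (T : ℝ) (hT : 0 < T) (b₀ ε₀ : ℝ) (hb₀ : b₀ ∈ Set.Icc (0 : ℝ) 1)
    (hε₀ : 0 ≤ ε₀) (hε₀ρ : ε₀ ≤ ρ w θ W T b₀) :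
    min (Γ₁ w θ η W c₁ c₂ 1 1) (ENNReal.ofReal T) ≤ Γ₁ w θ η W c₁ c₂ b₀ ε₀ :=
  stmt_10_general w θ η W c₁ c₂ (by positivity) hW T hT b₀ ε₀ hb₀.2 hε₀ρ
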